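/- Let $*_\mu$ ($\mu \ge 3$) denote the Kingman–Bessel convolution and $\bullet$ the convolution with $(\delta_r \bullet \delta_s)(f) = f(\sqrt{r^2+s^2})$ on probability measures on $[0,\infty)$. Let $\nu$ be a probability measure on $[0,\infty)$ with $m_2(\nu) < \infty$. Then there is a constant $C = C(\nu)$ such that for all root-Lipschitz functions $f$ with constant $L$ and all $n \ge 2$, $\mu \ge 3$: $|\nu^{(n,*_\mu)}(f) - \nu^{(n,\bullet)}(f)| \le C L\, n^{3/2}/\sqrt{\mu}$. -/

import Mathlib

open MeasureTheory Filter ProbabilityTheory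

/-- The Kingman–Bessel normalization constant `κ_μ = ∫_{-1}^1 (1-v²)^{μ-3/2} dv`. -/
noncomputable def kappa (μ : ℝ) : ℝ := ∫ v in Set.Icc (-1 : ℝ) 1, (1 - v ^ 2) ^ (μ - 3 / 2)

/-- The Kingman–Bessel convolution of two point measures `δ_r *_μ δ_s`:
`(δ_r *_μ δ_s)(f) = κ_μ⁻¹ ∫_{-1}^1 f(√(r²+s²+2rsv)) (1-v²)^{μ-3/2} dv`. -/
noncomputable def kingmanKernel (μ r s : ℝ) : Measure ℝ :=
  (ENNReal.ofReal (kappa μ))⁻¹ •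
    Measure.map (fun v => Real.sqrt (r ^ 2 + s ^ 2 + 2 * r * s * v))
      ((volume.restrict (Set.Icc (-1 : ℝ) 1)).withDensity
        fun v => ENNReal.ofReal ((1 - v ^ 2) ^ (μ - 3 / 2)))

/-- The Kingman–Bessel convolution of two measures on `[0,∞)`. -/
noncomputable def kingmanConv (μ : ℝ) (ν₁ ν₂ : Measure ℝ) : Measure ℝ :=
  ν₁.bind fun r => ν₂.bind fun s => kingmanKernel μ r s

/-- The degenerate convolution `•` with `(δ_r • δ_s)(f) = f(√(r²+s²))`. -/
noncomputable def bulletConv (ν₁ ν₂ : Measure ℝ) : Measure ℝ :=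
  Measure.map (fun p : ℝ × ℝ => Real.sqrt (p.1 ^ 2 + p.2 ^ 2)) (ν₁.prod ν₂)

/-- `n`-fold Kingman–Bessel convolution power `ν^{(n,*_μ)}`. -/
noncomputable def kingmanPow (μ : ℝ) (ν : Measure ℝ) : ℕ → Measure ℝ
  | 0 => Measure.dirac 0
  | n + 1 => kingmanConv μ ν (kingmanPow μ ν n)

/-- `n`-fold `•`-convolution power `ν^{(n,•)}`. -/
noncomputable def bulletPow (ν : Measure ℝ) : ℕ → Measure ℝ
  | 0 => Measure.dirac 0
  | n + 1 => bulletConv ν (bulletPow ν n)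

/-! For independent `X ~ ν`, `Y ~ ρ` and `V` with density proportional to `(1 - v²)^(μ - 3/2)` on
`[-1, 1]`, the measure `ν *_μ ρ` is the law of `√(X² + Y² + 2XYV)`, while `ν • ρ` is the same law
with `V` replaced by `0`. A root-Lipschitz `f` distinguishes the two by at most `2L E|X| E|Y| E|V|`,
and integrating the derivative of `v (1 - v²)^(μ - 1/2)` gives `E V² = 1 / (2μ)`, so
`E|V| ≤ 1 / √(2μ)`. Since `E V = 0`, second moments add up under both convolutions, hence
`E|Y| ≤ √(k m₂(ν))` when `Y` is distributed as the `k`-th power. As `s ↦ f (√(r² + s²))` is again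
root-Lipschitz with the same constant, `•`-convolution with `ν` does not increase the error, and
the errors of the successive replacements sum to at most `√2 L m₂(ν) ∑_{k < n} √k / √μ`. -/

/-- Functions that are `L`-Lipschitz in the square of their argument. The condition concerns only
the restriction of `f` to `[0, ∞)`. -/
def RootLipschitz (L : ℝ) (f : ℝ → ℝ) : Prop :=
  ∀ x y : ℝ, 0 ≤ x → 0 ≤ y → |f √x - f √y| ≤ L * |x - y|

namespace RootLipschitz

variable {L : ℝ} {f : ℝ → ℝ} {σ : Measure ℝ}

theorem nonneg (hf : RootLipschitz L f) : 0 ≤ L := by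
  simpa using (abs_nonneg _).trans (hf 1 0 zero_le_one le_rfl)

theorem continuous_comp_sqrt (hf : RootLipschitz L f) : Continuous fun x => f √x := by
  refine (LipschitzWith.of_dist_le' (K := L) fun x y => ?_).continuous
  have sqrt_max (z : ℝ) : √(max z 0) = √z := by
    rcases le_total 0 z with hz | hz
    · rw [max_eq_left hz]
    · rw [max_eq_right hz, Real.sqrt_zero, Real.sqrt_eq_zero_of_nonpos hz]
  calc |f √x - f √y| = |f √(max x 0) - f √(max y 0)| := by rw [sqrt_max, sqrt_max]
    _ ≤ L * |max x 0 - max y 0| := hf _ _ (le_max_right _ _) (le_max_right _ _)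
    _ ≤ L * |x - y| := mul_le_mul_of_nonneg_left (abs_max_sub_max_le_abs x y 0) hf.nonneg

theorem abs_le (hf : RootLipschitz L f) {x : ℝ} (hx : 0 ≤ x) : |f x| ≤ |f 0| + L * x ^ 2 := by
  have hf_zero := hf (x ^ 2) 0 (sq_nonneg x) le_rfl
  rw [Real.sqrt_sq hx, Real.sqrt_zero, sub_zero, abs_sq] at hf_zero
  linarith [abs_sub_abs_le_abs_sub (f x) (f 0)]

theorem comp_sqrt_sq_add_sq (hf : RootLipschitz L f) (r : ℝ) :
    RootLipschitz L fun s => f √(r ^ 2 + s ^ 2) := fun x y hx hy => by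
  have hshift := hf (r ^ 2 + x) (r ^ 2 + y) (by positivity) (by positivity)
  rw [add_sub_add_left_eq_sub] at hshift
  simpa only [Real.sq_sqrt hx, Real.sq_sqrt hy] using hshift

theorem aestronglyMeasurable (hf : RootLipschitz L f) (hσ : ∀ᵐ x ∂σ, 0 ≤ x) :
    AEStronglyMeasurable f σ := by
  have hcont : Continuous fun x : ℝ => f √(x ^ 2) :=
    hf.continuous_comp_sqrt.comp (continuous_pow 2)
  refine hcont.aestronglyMeasurable.congr ?_
  filter_upwards [hσ] with x hx
  rw [Real.sqrt_sq hx]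

theorem integrable [IsFiniteMeasure σ] (hf : RootLipschitz L f) (hσ : ∀ᵐ x ∂σ, 0 ≤ x)
    (hσ₂ : Integrable (fun x => x ^ 2) σ) : Integrable f σ := by
  refine ((integrable_const |f 0|).add (hσ₂.const_mul L)).mono' (hf.aestronglyMeasurable hσ) ?_
  filter_upwards [hσ] with x hx using hf.abs_le hx

end RootLipschitz

theorem integrable_id_of_integrable_sq {σ : Measure ℝ} [IsFiniteMeasure σ]
    (hσ₂ : Integrable (fun x => x ^ 2) σ) : Integrable (fun x => x) σ :=
  ((memLp_two_iff_integrable_sq aestronglyMeasurable_id).2 hσ₂).integrable one_le_two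

theorem integral_abs_le_sqrt_integral_sq {σ : Measure ℝ} [IsProbabilityMeasure σ]
    (hσ₂ : Integrable (fun x => x ^ 2) σ) : ∫ x, |x| ∂σ ≤ √(∫ x, x ^ 2 ∂σ) := by
  have habs : MemLp (fun x : ℝ => |x|) 2 σ :=
    ((memLp_two_iff_integrable_sq aestronglyMeasurable_id).2 hσ₂).abs
  have hvar := variance_nonneg (fun x : ℝ => |x|) σ
  simp only [variance_eq_sub habs, Pi.pow_apply, sq_abs] at hvar
  exact Real.le_sqrt_of_sq_le (sub_nonneg.1 hvar)

theorem bind_map_eq_map_prod {α β γ : Type*} [MeasurableSpace α] [MeasurableSpace β]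
    [MeasurableSpace γ] (ν : Measure α) (ρ : Measure β) [SFinite ρ] {φ : α × β → γ}
    (hφ : Measurable φ) :
    (ν.bind fun a => ρ.map fun b => φ (a, b)) = (ν.prod ρ).map φ := by
  have hmap (a : α) : (ρ.map fun b => φ (a, b)) = (ρ.map (Prod.mk a)).map φ :=
    (Measure.map_map hφ measurable_prodMk_left).symm
  have hkernel : Measurable fun a => (ρ.map (Prod.mk a)).map φ :=
    (Measure.measurable_map φ hφ).comp Measurable.map_prodMk_left
  simp only [hmap]
  ext S hS
  rw [Measure.bind_apply hS hkernel.aemeasurable, Measure.map_apply hφ hS,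
    Measure.prod_apply (hφ hS)]
  refine lintegral_congr fun a => ?_
  rw [Measure.map_apply hφ hS, Measure.map_apply measurable_prodMk_left (hφ hS)]

theorem ae_prod_prod_of_ae {α β γ : Type*} [MeasurableSpace α] [MeasurableSpace β]
    [MeasurableSpace γ] {ν : Measure α} {ρ : Measure β} {W : Measure γ} [SFinite ρ] [SFinite W]
    {P : γ → Prop} (hP : ∀ᵐ v ∂W, P v) : ∀ᵐ p ∂ν.prod (ρ.prod W), P p.2.2 :=
  (Measure.quasiMeasurePreserving_snd.comp Measure.quasiMeasurePreserving_snd).ae hP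

/-- The length of the sum of two vectors of lengths `r` and `s` whose angle has cosine `v`, as a
function of `(r, s, v)`. -/
noncomputable def resultant (p : ℝ × ℝ × ℝ) : ℝ :=
  √(p.1 ^ 2 + p.2.1 ^ 2 + 2 * p.1 * p.2.1 * p.2.2)

theorem measurable_resultant : Measurable resultant := by
  unfold resultant
  fun_prop

theorem sq_add_sq_add_two_mul_nonneg (r s : ℝ) {v : ℝ} (hv : |v| ≤ 1) :
    0 ≤ r ^ 2 + s ^ 2 + 2 * r * s * v := by
  have hv_sq : 0 ≤ 1 - v ^ 2 := sub_nonneg.2 (by rwa [sq_le_one_iff_abs_le_one])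
  calc 0 ≤ (r + s * v) ^ 2 + s ^ 2 * (1 - v ^ 2) := by positivity
    _ = r ^ 2 + s ^ 2 + 2 * r * s * v := by ring

/-- The law of `√(X² + Y² + 2XYV)` for independent `X ~ ν`, `Y ~ ρ`, `V ~ W`. Both convolutions of
the theorem are of this form, with `W` a symmetric beta law for `*_μ` and `W = δ₀` for `•`. -/
noncomputable def cosineConv (W ν ρ : Measure ℝ) : Measure ℝ :=
  (ν.prod (ρ.prod W)).map resultant

/-- The `n`-fold power of `ν` under `cosineConv W`. -/
noncomputable def cosinePow (W ν : Measure ℝ) : ℕ → Measure ℝ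
  | 0 => Measure.dirac 0
  | n + 1 => cosineConv W ν (cosinePow W ν n)

theorem bulletConv_eq_map_prod_prod (W ν ρ : Measure ℝ) [IsProbabilityMeasure W] [SFinite ν]
    [SFinite ρ] :
    bulletConv ν ρ = (ν.prod (ρ.prod W)).map fun p => √(p.1 ^ 2 + p.2.1 ^ 2) := by
  have hproj : MeasurePreserving (Prod.map id Prod.fst) (ν.prod (ρ.prod W)) (ν.prod ρ) :=
    (MeasurePreserving.id ν).prod measurePreserving_fst
  rw [bulletConv, ← hproj.map_eq, Measure.map_map (by fun_prop) hproj.measurable]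
  rfl

theorem bulletConv_eq_cosineConv_dirac (ν ρ : Measure ℝ) [SFinite ν] [SFinite ρ] :
    bulletConv ν ρ = cosineConv (Measure.dirac 0) ν ρ := by
  rw [bulletConv_eq_map_prod_prod (Measure.dirac 0), cosineConv]
  refine Measure.map_congr ?_
  have hzero : ∀ᵐ v : ℝ ∂Measure.dirac 0, v = 0 := (ae_dirac_iff measurableSet_eq).2 rfl
  filter_upwards [ae_prod_prod_of_ae hzero] with p hp
  rw [resultant, hp, mul_zero, add_zero]

theorem ae_nonneg_cosineConv {W ν ρ : Measure ℝ} : ∀ᵐ x ∂cosineConv W ν ρ, 0 ≤ x :=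
  (ae_map_iff measurable_resultant.aemeasurable measurableSet_Ici).2
    (ae_of_all _ fun _ => Real.sqrt_nonneg _)

theorem ae_sq_resultant {W ν ρ : Measure ℝ} [SFinite W] [SFinite ρ] (hW : ∀ᵐ v ∂W, |v| ≤ 1) :
    ∀ᵐ p ∂ν.prod (ρ.prod W),
      resultant p ^ 2 = (p.1 ^ 2 + p.2.1 ^ 2) + 2 * (p.1 * (p.2.1 * p.2.2)) := by
  filter_upwards [ae_prod_prod_of_ae hW] with p hp
  rw [resultant, Real.sq_sqrt (sq_add_sq_add_two_mul_nonneg _ _ hp)]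
  ring

theorem ae_abs_le_one_dirac_zero : ∀ᵐ v ∂Measure.dirac (0 : ℝ), |v| ≤ 1 :=
  (ae_dirac_iff (measurableSet_le (by fun_prop) measurable_const)).2 (by simp)

section CosineConv

variable {W ν ρ : Measure ℝ} [IsFiniteMeasure W] [IsFiniteMeasure ν] [IsFiniteMeasure ρ]

theorem integrable_id_of_ae_abs_le_one (hW : ∀ᵐ v ∂W, |v| ≤ 1) : Integrable (fun v => v) W :=
  .of_bound aestronglyMeasurable_id 1 hW

theorem integrable_mul_mul_prod_prod (hW : ∀ᵐ v ∂W, |v| ≤ 1)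
    (hν : Integrable (fun x => x ^ 2) ν) (hρ : Integrable (fun x => x ^ 2) ρ) :
    Integrable (fun p : ℝ × ℝ × ℝ => p.1 * (p.2.1 * p.2.2)) (ν.prod (ρ.prod W)) :=
  (integrable_id_of_integrable_sq hν).mul_prod
    ((integrable_id_of_integrable_sq hρ).mul_prod (integrable_id_of_ae_abs_le_one hW))

theorem integrable_sq_cosineConv (hW : ∀ᵐ v ∂W, |v| ≤ 1)
    (hν : Integrable (fun x => x ^ 2) ν) (hρ : Integrable (fun x => x ^ 2) ρ) :
    Integrable (fun x => x ^ 2) (cosineConv W ν ρ) := by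
  rw [cosineConv, integrable_map_measure (by fun_prop) measurable_resultant.aemeasurable]
  refine Integrable.congr ?_ ((ae_sq_resultant hW).mono fun p hp => hp.symm)
  exact ((hν.comp_fst _).add ((hρ.comp_fst W).comp_snd ν)).add
    ((integrable_mul_mul_prod_prod hW hν hρ).const_mul 2)

instance isFiniteMeasure_cosineConv : IsFiniteMeasure (cosineConv W ν ρ) :=
  Measure.isFiniteMeasure_map _ _

theorem RootLipschitz.integrable_cosineConv {L : ℝ} {f : ℝ → ℝ} (hf : RootLipschitz L f)
    (hW : ∀ᵐ v ∂W, |v| ≤ 1) (hν : Integrable (fun x => x ^ 2) ν)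
    (hρ : Integrable (fun x => x ^ 2) ρ) : Integrable f (cosineConv W ν ρ) :=
  hf.integrable ae_nonneg_cosineConv (integrable_sq_cosineConv hW hν hρ)

theorem RootLipschitz.integrable_bulletConv {L : ℝ} {f : ℝ → ℝ} (hf : RootLipschitz L f)
    (hν : Integrable (fun x => x ^ 2) ν) (hρ : Integrable (fun x => x ^ 2) ρ) :
    Integrable f (bulletConv ν ρ) := by
  rw [bulletConv_eq_cosineConv_dirac]
  exact hf.integrable_cosineConv ae_abs_le_one_dirac_zero hν hρ

end CosineConv

instance isProbabilityMeasure_cosineConv {W ν ρ : Measure ℝ} [IsProbabilityMeasure W]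
    [IsProbabilityMeasure ν] [IsProbabilityMeasure ρ] : IsProbabilityMeasure (cosineConv W ν ρ) :=
  Measure.isProbabilityMeasure_map measurable_resultant.aemeasurable

instance isProbabilityMeasure_cosinePow {W ν : Measure ℝ} [IsProbabilityMeasure W]
    [IsProbabilityMeasure ν] (n : ℕ) : IsProbabilityMeasure (cosinePow W ν n) := by
  induction n with
  | zero => exact Measure.dirac.isProbabilityMeasure
  | succ n ih => exact isProbabilityMeasure_cosineConv

theorem integral_sq_cosineConv {W ν ρ : Measure ℝ} [IsProbabilityMeasure W]
    [IsProbabilityMeasure ν] [IsProbabilityMeasure ρ] (hW : ∀ᵐ v ∂W, |v| ≤ 1) (hW₀ : ∫ v, v ∂W = 0)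
    (hν : Integrable (fun x => x ^ 2) ν) (hρ : Integrable (fun x => x ^ 2) ρ) :
    ∫ x, x ^ 2 ∂cosineConv W ν ρ = ∫ x, x ^ 2 ∂ν + ∫ x, x ^ 2 ∂ρ := by
  have hX : Integrable (fun p : ℝ × ℝ × ℝ => p.1 ^ 2) (ν.prod (ρ.prod W)) := hν.comp_fst _
  have hY : Integrable (fun p : ℝ × ℝ × ℝ => p.2.1 ^ 2) (ν.prod (ρ.prod W)) :=
    (hρ.comp_fst W).comp_snd ν
  have hXY : Integrable (fun p : ℝ × ℝ × ℝ => p.1 ^ 2 + p.2.1 ^ 2) (ν.prod (ρ.prod W)) := hX.add hY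
  have hXYV : ∫ p, p.1 * (p.2.1 * p.2.2) ∂ν.prod (ρ.prod W) = 0 := by
    rw [integral_prod_mul (fun r : ℝ => r) (fun q : ℝ × ℝ => q.1 * q.2),
      integral_prod_mul (fun s : ℝ => s) (fun v : ℝ => v), hW₀, mul_zero, mul_zero]
  rw [cosineConv, integral_map measurable_resultant.aemeasurable (by fun_prop),
    integral_congr_ae (ae_sq_resultant hW),
    integral_add hXY ((integrable_mul_mul_prod_prod hW hν hρ).const_mul 2), integral_const_mul,
    hXYV, integral_add hX hY, integral_fun_fst (fun r : ℝ => r ^ 2),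
    integral_fun_snd (fun q : ℝ × ℝ => q.1 ^ 2), integral_fun_fst (fun s : ℝ => s ^ 2)]
  simp only [probReal_univ, one_smul, mul_zero, add_zero]

theorem abs_integral_cosineConv_sub_bulletConv_le {W ν ρ : Measure ℝ} [IsProbabilityMeasure W]
    [IsFiniteMeasure ν] [IsFiniteMeasure ρ] (hW : ∀ᵐ v ∂W, |v| ≤ 1)
    (hν : Integrable (fun x => x ^ 2) ν) (hρ : Integrable (fun x => x ^ 2) ρ) {L : ℝ} {f : ℝ → ℝ}
    (hf : RootLipschitz L f) :
    |∫ x, f x ∂cosineConv W ν ρ - ∫ x, f x ∂bulletConv ν ρ| ≤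
      2 * L * ((∫ x, |x| ∂ν) * ((∫ x, |x| ∂ρ) * ∫ v, |v| ∂W)) := by
  have hf_cosine := hf.integrable_cosineConv hW hν hρ
  have hf_bullet := hf.integrable_bulletConv hν hρ
  have hmeas : Measurable fun p : ℝ × ℝ × ℝ => √(p.1 ^ 2 + p.2.1 ^ 2) := by fun_prop
  have hpointwise : ∀ᵐ p ∂ν.prod (ρ.prod W),
      ‖f (resultant p) - f √(p.1 ^ 2 + p.2.1 ^ 2)‖ ≤ 2 * L * |p.1 * (p.2.1 * p.2.2)| := by
    filter_upwards [ae_prod_prod_of_ae hW] with p hp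
    refine (hf _ _ (sq_add_sq_add_two_mul_nonneg _ _ hp) (by positivity)).trans_eq ?_
    rw [add_sub_cancel_left, mul_assoc (2 * p.1), mul_assoc 2, abs_mul 2, abs_two]
    ring
  rw [bulletConv_eq_map_prod_prod W] at hf_bullet ⊢
  rw [cosineConv] at hf_cosine ⊢
  have hint_cosine : Integrable (fun p => f (resultant p)) (ν.prod (ρ.prod W)) :=
    hf_cosine.comp_measurable measurable_resultant
  have hint_bullet : Integrable (fun p => f √(p.1 ^ 2 + p.2.1 ^ 2)) (ν.prod (ρ.prod W)) :=
    hf_bullet.comp_measurable hmeas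
  rw [integral_map measurable_resultant.aemeasurable hf_cosine.aestronglyMeasurable,
    integral_map hmeas.aemeasurable hf_bullet.aestronglyMeasurable,
    ← integral_sub hint_cosine hint_bullet]
  calc _ ≤ ∫ p, 2 * L * |p.1 * (p.2.1 * p.2.2)| ∂ν.prod (ρ.prod W) :=
        norm_integral_le_of_norm_le
          ((integrable_mul_mul_prod_prod hW hν hρ).abs.const_mul (2 * L)) hpointwise
    _ = 2 * L * ((∫ x, |x| ∂ν) * ((∫ x, |x| ∂ρ) * ∫ v, |v| ∂W)) := by
        simp only [abs_mul]
        rw [integral_const_mul,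
          integral_prod_mul (fun r : ℝ => |r|) (fun q : ℝ × ℝ => |q.1| * |q.2|),
          integral_prod_mul (fun s : ℝ => |s|) (fun v : ℝ => |v|)]

theorem abs_integral_bulletConv_sub_bulletConv_le {ν ρ σ : Measure ℝ}
    [IsProbabilityMeasure ν] [IsFiniteMeasure ρ] [IsFiniteMeasure σ]
    (hν : Integrable (fun x => x ^ 2) ν) (hρ : Integrable (fun x => x ^ 2) ρ)
    (hσ : Integrable (fun x => x ^ 2) σ) {L E : ℝ}
    (hE : ∀ g : ℝ → ℝ, RootLipschitz L g → |∫ x, g x ∂ρ - ∫ x, g x ∂σ| ≤ E)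
    {f : ℝ → ℝ} (hf : RootLipschitz L f) :
    |∫ x, f x ∂bulletConv ν ρ - ∫ x, f x ∂bulletConv ν σ| ≤ E := by
  have hmeas : Measurable fun p : ℝ × ℝ => √(p.1 ^ 2 + p.2 ^ 2) := by fun_prop
  have hf_ρ := hf.integrable_bulletConv hν hρ
  have hf_σ := hf.integrable_bulletConv hν hσ
  have hint_ρ : Integrable (fun p => f √(p.1 ^ 2 + p.2 ^ 2)) (ν.prod ρ) :=
    hf_ρ.comp_measurable hmeas
  have hint_σ : Integrable (fun p => f √(p.1 ^ 2 + p.2 ^ 2)) (ν.prod σ) :=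
    hf_σ.comp_measurable hmeas
  rw [bulletConv, bulletConv,
    integral_map hmeas.aemeasurable hf_ρ.aestronglyMeasurable,
    integral_map hmeas.aemeasurable hf_σ.aestronglyMeasurable,
    integral_prod _ hint_ρ, integral_prod _ hint_σ,
    ← integral_sub hint_ρ.integral_prod_left hint_σ.integral_prod_left]
  have hslice (r : ℝ) :
      ‖∫ s, f √(r ^ 2 + s ^ 2) ∂ρ - ∫ s, f √(r ^ 2 + s ^ 2) ∂σ‖ ≤ E :=
    hE _ (hf.comp_sqrt_sq_add_sq r)
  simpa only [Real.norm_eq_abs, probReal_univ, mul_one] using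
    norm_integral_le_of_norm_le_const (μ := ν) (ae_of_all _ hslice)

theorem bulletPow_eq_cosinePow_dirac (ν : Measure ℝ) [IsProbabilityMeasure ν] (n : ℕ) :
    bulletPow ν n = cosinePow (Measure.dirac 0) ν n := by
  induction n with
  | zero => rfl
  | succ n ih => rw [bulletPow, cosinePow, ih, bulletConv_eq_cosineConv_dirac]

instance isProbabilityMeasure_bulletPow (ν : Measure ℝ) [IsProbabilityMeasure ν] (n : ℕ) :
    IsProbabilityMeasure (bulletPow ν n) := by
  rw [bulletPow_eq_cosinePow_dirac]
  infer_instance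

section CosinePow

variable {W ν : Measure ℝ} [IsProbabilityMeasure W] [IsProbabilityMeasure ν]

theorem integrable_sq_cosinePow (hW : ∀ᵐ v ∂W, |v| ≤ 1) (hν : Integrable (fun x => x ^ 2) ν)
    (n : ℕ) : Integrable (fun x => x ^ 2) (cosinePow W ν n) := by
  induction n with
  | zero => exact integrable_dirac (by simp)
  | succ n ih => exact integrable_sq_cosineConv hW hν ih

theorem integrable_sq_bulletPow (hν : Integrable (fun x => x ^ 2) ν) (n : ℕ) :
    Integrable (fun x => x ^ 2) (bulletPow ν n) := by
  rw [bulletPow_eq_cosinePow_dirac]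
  exact integrable_sq_cosinePow ae_abs_le_one_dirac_zero hν n

theorem integral_sq_cosinePow (hW : ∀ᵐ v ∂W, |v| ≤ 1) (hW₀ : ∫ v, v ∂W = 0)
    (hν : Integrable (fun x => x ^ 2) ν) (n : ℕ) :
    ∫ x, x ^ 2 ∂cosinePow W ν n = n * ∫ x, x ^ 2 ∂ν := by
  induction n with
  | zero => simp [cosinePow]
  | succ n ih =>
    rw [cosinePow, integral_sq_cosineConv hW hW₀ hν (integrable_sq_cosinePow hW hν n), ih]
    push_cast
    ring

theorem integral_abs_mul_integral_abs_cosinePow_le (hW : ∀ᵐ v ∂W, |v| ≤ 1)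
    (hW₀ : ∫ v, v ∂W = 0) (hν : Integrable (fun x => x ^ 2) ν) (n : ℕ) :
    (∫ x, |x| ∂ν) * ∫ x, |x| ∂cosinePow W ν n ≤ √n * ∫ x, x ^ 2 ∂ν := by
  have hm₂ : 0 ≤ ∫ x, x ^ 2 ∂ν := integral_nonneg fun x => sq_nonneg x
  have hpow := integral_abs_le_sqrt_integral_sq (integrable_sq_cosinePow hW hν n)
  rw [integral_sq_cosinePow hW hW₀ hν, Real.sqrt_mul n.cast_nonneg] at hpow
  calc (∫ x, |x| ∂ν) * ∫ x, |x| ∂cosinePow W ν n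
      ≤ √(∫ x, x ^ 2 ∂ν) * (√n * √(∫ x, x ^ 2 ∂ν)) :=
        mul_le_mul (integral_abs_le_sqrt_integral_sq hν) hpow
          (integral_nonneg fun x => abs_nonneg x) (Real.sqrt_nonneg _)
    _ = √n * ∫ x, x ^ 2 ∂ν := by rw [mul_left_comm, Real.mul_self_sqrt hm₂]

theorem abs_integral_cosinePow_sub_bulletPow_le (hW : ∀ᵐ v ∂W, |v| ≤ 1) (hW₀ : ∫ v, v ∂W = 0)
    (hν : Integrable (fun x => x ^ 2) ν) {L : ℝ} {f : ℝ → ℝ} (hf : RootLipschitz L f) (n : ℕ) :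
    |∫ x, f x ∂cosinePow W ν n - ∫ x, f x ∂bulletPow ν n| ≤
      2 * L * (∫ x, x ^ 2 ∂ν) * (∫ v, |v| ∂W) * ∑ k ∈ Finset.range n, √(k : ℝ) := by
  induction n generalizing f with
  | zero => simp [cosinePow, bulletPow]
  | succ n ih =>
    have hcosine := integrable_sq_cosinePow hW hν n
    have hreplace : |∫ x, f x ∂cosineConv W ν (cosinePow W ν n) -
        ∫ x, f x ∂bulletConv ν (cosinePow W ν n)| ≤
          2 * L * (√n * (∫ x, x ^ 2 ∂ν) * ∫ v, |v| ∂W) := by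
      refine (abs_integral_cosineConv_sub_bulletConv_le hW hν hcosine hf).trans ?_
      rw [← mul_assoc (∫ x, |x| ∂ν)]
      have hL := hf.nonneg
      gcongr 2 * L * (?_ * _)
      exact integral_abs_mul_integral_abs_cosinePow_le hW hW₀ hν n
    have hcontract := abs_integral_bulletConv_sub_bulletConv_le hν hcosine
      (integrable_sq_bulletPow hν n) (fun g hg => ih hg) hf
    rw [cosinePow, bulletPow, Finset.sum_range_succ]
    linarith [abs_sub_le (∫ x, f x ∂cosineConv W ν (cosinePow W ν n))
      (∫ x, f x ∂bulletConv ν (cosinePow W ν n)) (∫ x, f x ∂bulletConv ν (bulletPow ν n))]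

end CosinePow

theorem sum_range_sqrt_le (n : ℕ) :
    ∑ k ∈ Finset.range n, √(k : ℝ) ≤ (n : ℝ) ^ ((3 : ℝ) / 2) :=
  calc ∑ k ∈ Finset.range n, √(k : ℝ) ≤ ∑ _k ∈ Finset.range n, √(n : ℝ) := by
        gcongr with k hk
        exact (Finset.mem_range.1 hk).le
    _ = (n : ℝ) ^ ((1 : ℝ) + 1 / 2) := by
        rw [Finset.sum_const, Finset.card_range, nsmul_eq_mul, Real.sqrt_eq_rpow,
          Real.rpow_one_add' n.cast_nonneg (by norm_num)]
    _ = (n : ℝ) ^ ((3 : ℝ) / 2) := by norm_num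

theorem intervalIntegrable_one_sub_sq_rpow {p : ℝ} (hp : -1 < p) :
    IntervalIntegrable (fun v : ℝ => (1 - v ^ 2) ^ p) volume (-1) 1 := by
  have hhalf : IntervalIntegrable (fun v : ℝ => (1 - v ^ 2) ^ p) volume 0 1 := by
    have hleft : IntervalIntegrable (fun v : ℝ => (1 - v) ^ p) volume 0 1 := by
      simpa using ((intervalIntegral.intervalIntegrable_rpow' hp).comp_sub_left
        (a := 0) (b := 1) 1).symm
    have hright : ContinuousOn (fun v : ℝ => (1 + v) ^ p) (Set.uIcc 0 1) := by
      refine ContinuousOn.rpow_const (by fun_prop) fun v hv => Or.inl ?_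
      rw [Set.uIcc_of_le zero_le_one] at hv
      linarith [hv.1]
    refine (hleft.mul_continuousOn hright).congr fun v hv => ?_
    rw [Set.uIoc_of_le zero_le_one] at hv
    rw [← Real.mul_rpow (by linarith [hv.2]) (by linarith [hv.1])]
    ring_nf
  have hreflected := (hhalf.comp_sub_left 0).symm
  simp only [zero_sub, neg_sq, neg_zero] at hreflected
  simpa using hreflected.trans (by simpa using hhalf)

theorem hasDerivAt_mul_one_sub_sq_rpow (p : ℝ) {x : ℝ} (hx : x ∈ Set.Ioo (-1 : ℝ) 1) :
    HasDerivAt (fun v : ℝ => v * (1 - v ^ 2) ^ (p + 1))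
      ((1 - x ^ 2) ^ p - (2 * p + 3) * ((1 - x ^ 2) ^ p * x ^ 2)) x := by
  have hpos : 0 < 1 - x ^ 2 := by nlinarith [hx.1, hx.2]
  have hbase : HasDerivAt (fun v : ℝ => 1 - v ^ 2) (-(2 * x)) x := by
    simpa using (hasDerivAt_pow 2 x).const_sub 1
  refine ((hasDerivAt_id x).mul (hbase.rpow_const (p := p + 1) (Or.inl hpos.ne'))).congr_deriv ?_
  rw [add_sub_cancel_right, Real.rpow_add_one hpos.ne', id]
  ring

theorem integral_one_sub_sq_rpow_mul_sq {p : ℝ} (hp : -1 < p) :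
    (2 * p + 3) * ∫ v in (-1 : ℝ)..1, (1 - v ^ 2) ^ p * v ^ 2 =
      ∫ v in (-1 : ℝ)..1, (1 - v ^ 2) ^ p := by
  have hint := intervalIntegrable_one_sub_sq_rpow hp
  have hint_sq : IntervalIntegrable (fun v : ℝ => (1 - v ^ 2) ^ p * v ^ 2) volume (-1) 1 :=
    hint.mul_continuousOn (by fun_prop)
  have hcont : Continuous fun v : ℝ => v * (1 - v ^ 2) ^ (p + 1) :=
    continuous_id.mul (Continuous.rpow_const (by fun_prop) fun _ => Or.inr (by linarith))
  have hftc := intervalIntegral.integral_eq_sub_of_hasDerivAt_of_le (by norm_num)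
    hcont.continuousOn (fun _ => hasDerivAt_mul_one_sub_sq_rpow p)
    (hint.sub (hint_sq.const_mul (2 * p + 3)))
  rw [intervalIntegral.integral_sub hint (hint_sq.const_mul _),
    intervalIntegral.integral_const_mul] at hftc
  have hboundary : (1 - 1 : ℝ) ^ (p + 1) = 0 := by
    rw [sub_self, Real.zero_rpow (by linarith)]
  simp only [neg_sq, one_pow, hboundary, mul_zero, sub_zero] at hftc
  exact (sub_eq_zero.1 hftc).symm

theorem one_sub_sq_rpow_nonneg (p : ℝ) {v : ℝ} (hv : v ∈ Set.Icc (-1 : ℝ) 1) :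
    0 ≤ (1 - v ^ 2) ^ p :=
  Real.rpow_nonneg (sub_nonneg.2 ((sq_le_one_iff_abs_le_one v).2 (abs_le.2 hv))) p

section KingmanCosineLaw

variable {μ : ℝ}

/-- The law of `V` in the description `√(r² + s² + 2rsV)` of `δ_r *_μ δ_s`, with density
`κ_μ⁻¹ (1 - v²)^(μ - 3/2)` on `[-1, 1]`. It is a probability measure for `μ > 1/2`. -/
noncomputable def kingmanCosineLaw (μ : ℝ) : Measure ℝ :=
  (ENNReal.ofReal (kappa μ))⁻¹ •
    (volume.restrict (Set.Icc (-1 : ℝ) 1)).withDensity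
      fun v => ENNReal.ofReal ((1 - v ^ 2) ^ (μ - 3 / 2))

theorem kappa_eq_intervalIntegral (μ : ℝ) :
    kappa μ = ∫ v in (-1 : ℝ)..1, (1 - v ^ 2) ^ (μ - 3 / 2) := by
  rw [kappa, integral_Icc_eq_integral_Ioc, intervalIntegral.integral_of_le (by norm_num)]

theorem kappa_nonneg (μ : ℝ) : 0 ≤ kappa μ :=
  setIntegral_nonneg measurableSet_Icc fun _ hv => one_sub_sq_rpow_nonneg _ hv

theorem kappa_pos (hμ : 1 / 2 < μ) : 0 < kappa μ := by
  rw [kappa_eq_intervalIntegral]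
  refine intervalIntegral.intervalIntegral_pos_of_pos_on
    (intervalIntegrable_one_sub_sq_rpow (by linarith)) (fun v hv => ?_) (by norm_num)
  exact Real.rpow_pos_of_pos (by nlinarith [hv.1, hv.2]) _

theorem isProbabilityMeasure_kingmanCosineLaw (hμ : 1 / 2 < μ) :
    IsProbabilityMeasure (kingmanCosineLaw μ) := by
  have hint : IntegrableOn (fun v : ℝ => (1 - v ^ 2) ^ (μ - 3 / 2)) (Set.Icc (-1) 1) :=
    (intervalIntegrable_iff_integrableOn_Icc_of_le (by norm_num)).1
      (intervalIntegrable_one_sub_sq_rpow (by linarith))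
  have hnonneg : 0 ≤ᵐ[volume.restrict (Set.Icc (-1) 1)] fun v : ℝ => (1 - v ^ 2) ^ (μ - 3 / 2) :=
    (ae_restrict_mem measurableSet_Icc).mono fun v hv => one_sub_sq_rpow_nonneg _ hv
  constructor
  rw [kingmanCosineLaw, Measure.smul_apply, withDensity_apply _ MeasurableSet.univ,
    Measure.restrict_univ, ← ofReal_integral_eq_lintegral_ofReal hint hnonneg, ← kappa, smul_eq_mul,
    ENNReal.inv_mul_cancel (ENNReal.ofReal_pos.2 (kappa_pos hμ)).ne' ENNReal.ofReal_ne_top]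

theorem ae_abs_le_one_kingmanCosineLaw (μ : ℝ) : ∀ᵐ v ∂kingmanCosineLaw μ, |v| ≤ 1 := by
  refine Measure.ae_smul_measure ((withDensity_absolutelyContinuous _ _).ae_le ?_) _
  filter_upwards [ae_restrict_mem measurableSet_Icc] with v hv using abs_le.2 hv

theorem integral_kingmanCosineLaw (μ : ℝ) (g : ℝ → ℝ) :
    ∫ v, g v ∂kingmanCosineLaw μ =
      (kappa μ)⁻¹ * ∫ v in (-1 : ℝ)..1, (1 - v ^ 2) ^ (μ - 3 / 2) * g v := by
  have hmeas : Measurable fun v : ℝ => ENNReal.ofReal ((1 - v ^ 2) ^ (μ - 3 / 2)) := by fun_prop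
  rw [kingmanCosineLaw, integral_smul_measure,
    integral_withDensity_eq_integral_toReal_smul hmeas (by simp), ENNReal.toReal_inv,
    ENNReal.toReal_ofReal (kappa_nonneg μ), smul_eq_mul,
    intervalIntegral.integral_of_le (by norm_num), ← integral_Icc_eq_integral_Ioc]
  congr 1
  refine setIntegral_congr_fun measurableSet_Icc fun v hv => ?_
  simp only [ENNReal.toReal_ofReal (one_sub_sq_rpow_nonneg _ hv), smul_eq_mul]

theorem integral_id_kingmanCosineLaw (μ : ℝ) : ∫ v, v ∂kingmanCosineLaw μ = 0 := by
  have hodd := intervalIntegral.integral_comp_neg (a := -1) (b := 1)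
    fun v : ℝ => (1 - v ^ 2) ^ (μ - 3 / 2) * v
  simp only [neg_neg, neg_sq, mul_neg, intervalIntegral.integral_neg] at hodd
  rw [integral_kingmanCosineLaw, self_eq_neg.1 hodd.symm, mul_zero]

theorem integral_sq_kingmanCosineLaw (hμ : 1 / 2 < μ) :
    ∫ v, v ^ 2 ∂kingmanCosineLaw μ = 1 / (2 * μ) := by
  have hmoment := integral_one_sub_sq_rpow_mul_sq (p := μ - 3 / 2) (by linarith)
  rw [← kappa_eq_intervalIntegral, show 2 * (μ - 3 / 2) + 3 = 2 * μ by ring] at hmoment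
  have hκ := (kappa_pos hμ).ne'
  have hμ₀ : 2 * μ ≠ 0 := by linarith
  rw [integral_kingmanCosineLaw, inv_mul_eq_div, div_eq_div_iff hκ hμ₀, one_mul, mul_comm, hmoment]

theorem integral_abs_kingmanCosineLaw_le (hμ : 1 / 2 < μ) :
    ∫ v, |v| ∂kingmanCosineLaw μ ≤ 1 / (√2 * √μ) := by
  have := isProbabilityMeasure_kingmanCosineLaw hμ
  have hint : Integrable (fun v => v ^ 2) (kingmanCosineLaw μ) :=
    .of_bound (by fun_prop) 1 ((ae_abs_le_one_kingmanCosineLaw μ).mono fun v hv => by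
      rwa [Real.norm_eq_abs, abs_sq, sq_le_one_iff_abs_le_one])
  refine (integral_abs_le_sqrt_integral_sq hint).trans_eq ?_
  rw [integral_sq_kingmanCosineLaw hμ, Real.sqrt_div zero_le_one, Real.sqrt_one,
    Real.sqrt_mul zero_le_two]

end KingmanCosineLaw

theorem kingmanConv_eq_cosineConv (μ : ℝ) (ν ρ : Measure ℝ) [SFinite ρ] :
    kingmanConv μ ν ρ = cosineConv (kingmanCosineLaw μ) ν ρ := by
  have : SFinite (kingmanCosineLaw μ) := by
    unfold kingmanCosineLaw
    infer_instance
  have hkernel (r s : ℝ) :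
      kingmanKernel μ r s = (kingmanCosineLaw μ).map fun v => resultant (r, s, v) := by
    rw [kingmanKernel, kingmanCosineLaw, Measure.map_smul]
    rfl
  simp only [kingmanConv, cosineConv, hkernel]
  rw [← bind_map_eq_map_prod ν _ measurable_resultant]
  congr 1
  funext r
  exact bind_map_eq_map_prod ρ (kingmanCosineLaw μ) (φ := fun q => resultant (r, q))
    (measurable_resultant.comp measurable_prodMk_left)

theorem kingmanPow_eq_cosinePow {μ : ℝ} (hμ : 1 / 2 < μ) (ν : Measure ℝ) [IsProbabilityMeasure ν]
    (n : ℕ) : kingmanPow μ ν n = cosinePow (kingmanCosineLaw μ) ν n := by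
  have := isProbabilityMeasure_kingmanCosineLaw hμ
  induction n with
  | zero => rfl
  | succ n ih => rw [kingmanPow, cosinePow, ih, kingmanConv_eq_cosineConv]

theorem power_comparison_general (ν : Measure ℝ) [IsProbabilityMeasure ν]
    (hν : Integrable (fun x => x ^ 2) ν) {f : ℝ → ℝ} {L : ℝ} (hf : RootLipschitz L f) (n : ℕ)
    {μ : ℝ} (hμ : 1 / 2 < μ) :
    |(∫ x, f x ∂kingmanPow μ ν n) - ∫ x, f x ∂bulletPow ν n| ≤
      √2 * (∫ x, x ^ 2 ∂ν) * L * (n : ℝ) ^ ((3 : ℝ) / 2) / √μ := by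
  have := isProbabilityMeasure_kingmanCosineLaw hμ
  have hL := hf.nonneg
  calc |(∫ x, f x ∂kingmanPow μ ν n) - ∫ x, f x ∂bulletPow ν n|
      ≤ 2 * L * (∫ x, x ^ 2 ∂ν) * (∫ v, |v| ∂kingmanCosineLaw μ) *
          ∑ k ∈ Finset.range n, √(k : ℝ) := by
        rw [kingmanPow_eq_cosinePow hμ]
        exact abs_integral_cosinePow_sub_bulletPow_le (ae_abs_le_one_kingmanCosineLaw μ)
          (integral_id_kingmanCosineLaw μ) hν hf n
    _ ≤ 2 * L * (∫ x, x ^ 2 ∂ν) * (1 / (√2 * √μ)) * (n : ℝ) ^ ((3 : ℝ) / 2) := by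
        gcongr
        · exact integral_abs_kingmanCosineLaw_le hμ
        · exact sum_range_sqrt_le n
    _ = √2 * (∫ x, x ^ 2 ∂ν) * L * (n : ℝ) ^ ((3 : ℝ) / 2) / √μ := by
        rw [one_div, mul_inv, ← div_eq_mul_inv]
        nth_rw 1 [← Real.mul_self_sqrt zero_le_two]
        field_simp

/-- Comparison of `n`-fold convolution powers:
`|ν^{(n,*_μ)}(f) - ν^{(n,•)}(f)| ≤ C L n^{3/2}/√μ` for root-Lipschitz `f`. -/
theorem power_comparison (ν : Measure ℝ) [IsProbabilityMeasure ν]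
    (hν : ν (Set.Iio 0) = 0) (hi : Integrable (fun x => x ^ 2) ν) :
    ∃ C > (0 : ℝ), ∀ (f : ℝ → ℝ) (L : ℝ), Measurable f →
      (∀ x y : ℝ, 0 ≤ x → 0 ≤ y →
        |f (Real.sqrt x) - f (Real.sqrt y)| ≤ L * |x - y|) →
      ∀ n : ℕ, 2 ≤ n → ∀ μ : ℝ, μ ≥ 3 →
        |(∫ x, f x ∂(kingmanPow μ ν n)) - ∫ x, f x ∂(bulletPow ν n)|
          ≤ C * L * (n : ℝ) ^ ((3 : ℝ) / 2) / Real.sqrt μ := by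
  refine ⟨√2 * (∫ x, x ^ 2 ∂ν) + 1, by positivity, fun f L _ hf n _ μ hμ => ?_⟩
  have hL : 0 ≤ L := RootLipschitz.nonneg hf
  refine (power_comparison_general ν hi hf n (by linarith)).trans ?_
  gcongr
  exact le_add_of_nonneg_right zero_le_one
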